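/- Let I ⊆ K[x_1, ..., x_n] be a matroidal ideal of degree 2 with supp(I) = {x_1, ..., x_n}. Then there exist subsets S_1, ..., S_m of {x_1, ..., x_n} such that: (i) m ≥ 2 and |S_i| ≥ 1 for each i; (ii) S_i ∩ S_j = ∅ for i ≠ j and ⋃_{i=1}^m S_i = {x_1, ..., x_n}; (iii) if x ∈ S_i and y ∈ S_j with i ≠ j, then xy ∈ G(I); (iv) if x, y ∈ S_i for some i, then xy ∉ G(I). Moreover, if P_i denotes the prime ideal generated by {x_1, ..., x_n} ∖ S_i, then I = P_1 ∩ P_2 ∩ ⋯ ∩ P_m is the primary decomposition of I. -/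

import Mathlib

/-!
A matroid of rank two without loops is determined by its parallel classes. Call `x` and `y`
parallel when `{x, y}` is not a basis. Reflexivity holds since `{x, x}` has only one element, and
transitivity is the exchange property (`parallel_trans`). The `S i` are the classes of this
relation; there are at least two because the elements of any basis lie in different classes.

Both sides of `I = ⨅ i, P i` are monomial ideals, so membership is tested on the support of each
exponent vector. A monomial lies in every `P i` exactly when its support is contained in no
single class, that is, when its support contains two non-parallel variables, that is, when a
generator of `I` divides it. Each `P i` is prime as the kernel of the substitution
that kills the variables outside `S i`.
-/


open MvPolynomial

/-- The square-free monomial `∏ i in S, X i`. -/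
noncomputable def sqMon {n : ℕ} (K : Type*) [Field K] (S : Finset (Fin n)) :
    MvPolynomial (Fin n) K := ∏ i ∈ S, X i

/-- The basis-exchange property for a family of supports. -/
def ExchangeProp {n : ℕ} (B : Finset (Finset (Fin n))) : Prop :=
  ∀ u ∈ B, ∀ v ∈ B, ∀ i ∈ u, i ∉ v → ∃ j ∈ v, j ∉ u ∧ insert j (u.erase i) ∈ B

/-- `I` is a matroidal ideal of degree `d`, whose minimal monomial generators are the
square-free monomials with supports in `B`. -/
def IsMatroidal {n : ℕ} (K : Type*) [Field K] (I : Ideal (MvPolynomial (Fin n) K))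
    (B : Finset (Finset (Fin n))) (d : ℕ) : Prop :=
  B.Nonempty ∧ (∀ S ∈ B, S.card = d) ∧ ExchangeProp B ∧
    I = Ideal.span (sqMon K '' (B : Set (Finset (Fin n))))

/-- `supp(I) = {x_1, …, x_n}` for a matroidal ideal with generating supports `B`. -/
def FullSupport {n : ℕ} (B : Finset (Finset (Fin n))) : Prop :=
  ∀ i : Fin n, ∃ S ∈ B, i ∈ S

/-- The height of an ideal: the infimum of the heights of the primes containing it. -/
noncomputable def idealHeight {A : Type*} [CommRing A] (I : Ideal A) : ℕ∞ :=
  ⨅ (p : PrimeSpectrum A) (_ : I ≤ p.asIdeal), Order.height p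

/-- The `J`-depth of the ring `A`: the supremum of the lengths of regular sequences
contained in `J`. -/
noncomputable def ringDepth (A : Type*) [CommRing A] (J : Ideal A) : ℕ∞ :=
  ⨆ (rs : {l : List A // (∀ r ∈ l, r ∈ J) ∧ RingTheory.Sequence.IsRegular A l}),
    (rs.1.length : ℕ∞)

/-- A commutative ring is Cohen–Macaulay if at every maximal ideal the depth of the
localization equals its Krull dimension. -/
def IsCohenMacaulayRing (A : Type*) [CommRing A] : Prop :=
  ∀ (p : Ideal A) (hp : p.IsMaximal),
    letI : p.IsPrime := hp.isPrime
    (ringDepth (Localization.AtPrime p)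
        (IsLocalRing.maximalIdeal (Localization.AtPrime p)) : WithBot ℕ∞)
      = ringKrullDim (Localization.AtPrime p)

/-- The arithmetical rank of an ideal. -/
noncomputable def araIdeal {A : Type*} [CommRing A] (I : Ideal A) : ℕ :=
  sInf {m : ℕ | ∃ f : Fin m → A, (Ideal.span (Set.range f)).radical = I.radical}

/-- An ideal is unmixed if all of its associated primes have the same height. -/
def IsUnmixed {A : Type*} [CommRing A] (I : Ideal A) : Prop :=
  ∀ p ∈ associatedPrimes A (A ⧸ I), ∀ q ∈ associatedPrimes A (A ⧸ I),
    idealHeight p = idealHeight q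

/-- The square-free Veronese ideal of degree `d` in all the variables. -/
noncomputable def sqVeronese {n : ℕ} (K : Type*) [Field K] (d : ℕ) :
    Ideal (MvPolynomial (Fin n) K) :=
  Ideal.span (sqMon K '' {S : Finset (Fin n) | S.card = d})

/-- The ordering `u` of the generating supports, together with the variable sets `V`,
witnesses that the square-free monomial ideal generated by `sqMon K ∘ u` has linear
quotients: each colon ideal `⟨u_0, …, u_{j-1}⟩ : u_j` is generated by the variables in
`V j`. -/
def LinearQuotientWitness {n s : ℕ} (K : Type*) [Field K]
    (u : Fin s → Finset (Fin n)) (V : Fin s → Finset (Fin n)) : Prop :=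
  ∀ j : Fin s,
    (Ideal.span (sqMon K '' (u '' {k | k < j}))).colon (Ideal.span {sqMon K (u j)})
      = Ideal.span ((fun i => (X i : MvPolynomial (Fin n) K)) '' (V j : Set (Fin n)))

/-- The linear quotient index `q(I)` attached to a linear quotient witness:
the maximum, over `j ≥ 1`, of the number of variables generating the `j`-th colon ideal. -/
def lqIndex {n s : ℕ} (V : Fin s → Finset (Fin n)) : ℕ :=
  (Finset.univ.filter fun j : Fin s => (j : ℕ) ≠ 0).sup fun j => (V j).card

open CategoryTheory in
/-- The module `M` has projective dimension at most `k`. -/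
def HasProjDimLE {A : Type*} [CommRing A] (M : ModuleCat A) (k : ℕ) : Prop :=
  ∃ P : ProjectiveResolution M, ∀ i : ℕ, k < i → Limits.IsZero (P.complex.X i)

/-- The ideal generated by the variables `X i`, `i ∈ A`. -/
noncomputable def varIdeal {n : ℕ} (K : Type*) [Field K] (A : Finset (Fin n)) :
    Ideal (MvPolynomial (Fin n) K) :=
  Ideal.span ((fun i => (X i : MvPolynomial (Fin n) K)) '' (A : Set (Fin n)))

/-- A monomial ideal generated by square-free monomials is tested on supports of exponents. -/
theorem mem_span_sqMon_iff {K : Type*} [Field K] {n : ℕ} {B : Set (Finset (Fin n))}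
    {f : MvPolynomial (Fin n) K} :
    f ∈ Ideal.span (sqMon K '' B) ↔ ∀ m ∈ f.support, ∃ S ∈ B, ∀ x ∈ S, m x ≠ 0 := by
  have hmon : sqMon K '' B = (fun s => monomial s (1 : K)) ''
      ((fun S : Finset (Fin n) => ∑ i ∈ S, Finsupp.single i 1) '' B) := by
    rw [Set.image_image]
    refine Set.image_congr fun S _ => ?_
    rw [monomial_sum_one]
    rfl
  rw [hmon, mem_ideal_span_monomial_image]
  refine forall₂_congr fun m _ => ?_
  rw [Set.exists_mem_image]
  refine exists_congr fun S => and_congr_right fun _ => ?_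
  simp only [Finsupp.le_def, Finsupp.finsetSum_apply, Finsupp.single_apply,
    Finset.sum_ite_eq']
  refine forall_congr' fun x => ?_
  by_cases hx : x ∈ S <;> simp [hx, Nat.one_le_iff_ne_zero]

theorem mem_varIdeal_iff {K : Type*} [Field K] {n : ℕ} {A : Finset (Fin n)}
    {f : MvPolynomial (Fin n) K} :
    f ∈ varIdeal K A ↔ ∀ m ∈ f.support, ∃ x ∈ A, m x ≠ 0 := by
  exact mem_ideal_span_X_image (x := f) (s := (A : Set (Fin n)))

theorem varIdeal_isPrime {K : Type*} [Field K] {n : ℕ} (A : Finset (Fin n)) :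
    (varIdeal K A).IsPrime := by
  let φ : MvPolynomial (Fin n) K →ₐ[K] MvPolynomial (Fin n) K :=
    aeval fun i => if i ∈ A then 0 else X i
  have hker : varIdeal K A = RingHom.ker φ := by
    apply le_antisymm
    · refine Ideal.span_le.2 ?_
      rintro _ ⟨i, hi, rfl⟩
      have hi' : i ∈ A := hi
      simp [φ, RingHom.mem_ker, hi']
    · -- Killing the variables in `A` does not change a polynomial modulo `varIdeal K A`.
      have hcomp : (Ideal.Quotient.mkₐ K (varIdeal K A)).comp φ =
          Ideal.Quotient.mkₐ K (varIdeal K A) := by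
        apply algHom_ext
        intro i
        by_cases hi : i ∈ A
        · have hX : (X i : MvPolynomial (Fin n) K) ∈ varIdeal K A :=
            Ideal.subset_span ⟨i, hi, rfl⟩
          simpa [φ, hi] using (Ideal.Quotient.eq_zero_iff_mem.2 hX).symm
        · simp [φ, hi]
      intro f hf
      have h := DFunLike.congr_fun hcomp f
      rw [AlgHom.comp_apply, (RingHom.mem_ker).1 hf, map_zero] at h
      exact Ideal.Quotient.eq_zero_iff_mem.1 h.symm
  rw [hker]
  exact RingHom.ker_isPrime _

/-- Extend `y` to a basis `{y, w}`; if `{x, z}` were a basis, exchanging `w` into it would make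
`{x, y}` or `{y, z}` a basis. -/
theorem parallel_trans {n : ℕ} {B : Finset (Finset (Fin n))} (hcard : ∀ S ∈ B, S.card = 2)
    (hex : ExchangeProp B) (hsupp : FullSupport B) {x y z : Fin n}
    (hxy : ({x, y} : Finset (Fin n)) ∉ B) (hyz : ({y, z} : Finset (Fin n)) ∉ B) :
    ({x, z} : Finset (Fin n)) ∉ B := by
  intro hxz
  obtain ⟨S, hS, hyS⟩ := hsupp y
  obtain ⟨w, hw⟩ : ∃ w, S.erase y = {w} := by
    rw [← Finset.card_eq_one, Finset.card_erase_of_mem hyS, hcard S hS]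
  have hSw : S = {y, w} := by rw [← Finset.insert_erase hyS, hw]
  have hwy : w ≠ y := by
    have : w ∈ S.erase y := by simp [hw]
    exact Finset.ne_of_mem_erase this
  subst hSw
  have hwxz : w ∉ ({x, z} : Finset (Fin n)) := by
    simp only [Finset.mem_insert, Finset.mem_singleton]
    rintro (rfl | rfl)
    · exact hxy (Finset.pair_comm y w ▸ hS)
    · exact hyz hS
  obtain ⟨j, hj, -, hjB⟩ := hex _ hS _ hxz w (by simp) hwxz
  have hyw : ({y, w} : Finset (Fin n)).erase w = {y} := by
    ext a
    simp only [Finset.mem_erase, Finset.mem_insert, Finset.mem_singleton]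
    grind
  rw [hyw] at hjB
  simp only [Finset.mem_insert, Finset.mem_singleton] at hj
  rcases hj with rfl | rfl
  · exact hxy hjB
  · exact hyz (Finset.pair_comm j y ▸ hjB)

/-- Let `I ⊆ K[x_1, …, x_n]` be a matroidal ideal of degree `2` with
`supp(I) = {x_1, …, x_n}`.  Then there are subsets `S_1, …, S_m` of the variables with:
(i) `m ≥ 2` and each `S_i` nonempty; (ii) the `S_i` are pairwise disjoint and cover all
variables; (iii) `x ∈ S_i`, `y ∈ S_j`, `i ≠ j` implies `xy ∈ G(I)`; (iv) `x, y ∈ S_i`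
implies `xy ∉ G(I)`.  Moreover, with `P_i` the prime ideal generated by the variables not
in `S_i`, `I = P_1 ∩ ⋯ ∩ P_m` is the primary decomposition of `I`. -/
theorem statement6 {K : Type*} [Field K] {n : ℕ}
    {I : Ideal (MvPolynomial (Fin n) K)} {B : Finset (Finset (Fin n))}
    (hI : IsMatroidal K I B 2) (hsupp : FullSupport B) :
    ∃ (m : ℕ) (S : Fin m → Finset (Fin n)),
      2 ≤ m ∧ (∀ i, (S i).Nonempty) ∧
      (∀ i j, i ≠ j → Disjoint (S i) (S j)) ∧
      (∀ x : Fin n, ∃ i, x ∈ S i) ∧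
      (∀ i j, i ≠ j → ∀ x ∈ S i, ∀ y ∈ S j, ({x, y} : Finset (Fin n)) ∈ B) ∧
      (∀ i, ∀ x ∈ S i, ∀ y ∈ S i, ({x, y} : Finset (Fin n)) ∉ B) ∧
      (∀ i, (varIdeal K (Finset.univ \ S i)).IsPrime) ∧
      I = ⨅ i, varIdeal K (Finset.univ \ S i) := by
  classical
  obtain ⟨⟨b, hb⟩, hcard, hex, rfl⟩ := hI
  let r : Setoid (Fin n) :=
    { r := fun x y => ({x, y} : Finset (Fin n)) ∉ B
      iseqv :=
        { refl := fun x h => by simpa using hcard _ h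
          symm := fun {x y} h => Finset.pair_comm x y ▸ h
          trans := parallel_trans hcard hex hsupp } }
  let e := Fintype.equivFin (Quotient r)
  let c : Fin n → Fin (Fintype.card (Quotient r)) := fun x => e (Quotient.mk r x)
  have hc : ∀ x y, c x = c y ↔ ({x, y} : Finset (Fin n)) ∉ B := fun x y =>
    e.injective.eq_iff.trans Quotient.eq
  have hc' : ∀ x y, c x ≠ c y ↔ ({x, y} : Finset (Fin n)) ∈ B := fun x y => by
    rw [Ne, hc, not_not]
  obtain ⟨p, q, -, rfl⟩ := Finset.card_eq_two.1 (hcard b hb)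
  have hpq : c p ≠ c q := (hc' p q).2 hb
  refine ⟨_, fun i => Finset.univ.filter fun x => c x = i, ?_, ?_, ?_, ?_, ?_, ?_,
    fun i => varIdeal_isPrime _, ?_⟩
  · have : Nontrivial (Fin (Fintype.card (Quotient r))) := ⟨_, _, hpq⟩
    exact Fin.nontrivial_iff_two_le.1 this
  · intro i
    obtain ⟨x, hx⟩ := Quotient.exists_rep (e.symm i)
    exact ⟨x, by simp [c, hx]⟩
  · intro i j hij
    rw [Finset.disjoint_left]
    intro x hx hy
    simp only [Finset.mem_filter_univ] at hx hy
    exact hij (hx.symm.trans hy)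
  · exact fun x => ⟨c x, by simp⟩
  · intro i j hij x hx y hy
    simp only [Finset.mem_filter_univ] at hx hy
    rw [← hc', hx, hy]
    exact hij
  · intro i x hx y hy
    simp only [Finset.mem_filter_univ] at hx hy
    rw [← hc, hx, hy]
  · ext f
    simp only [Submodule.mem_iInf, mem_varIdeal_iff]
    rw [mem_span_sqMon_iff]
    constructor
    · intro h i m hm
      obtain ⟨S, hS, hmS⟩ := h m hm
      obtain ⟨x, y, -, rfl⟩ := Finset.card_eq_two.1 (hcard S hS)
      have hxy : c x ≠ c y := (hc' x y).2 hS
      by_cases hx : c x = i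
      · exact ⟨y, by simpa using fun hy => hxy (hx.trans hy.symm), hmS y (by simp)⟩
      · exact ⟨x, by simpa using hx, hmS x (by simp)⟩
    · intro h m hm
      -- Any class gives some variable `x` in the support of `m`; the class of `x` then gives a
      -- variable `y` of the support that is not parallel to `x`.
      obtain ⟨x, -, hmx⟩ := h (c p) m hm
      obtain ⟨y, hy, hmy⟩ := h (c x) m hm
      have hyx : c y ≠ c x := by simpa using hy
      refine ⟨{y, x}, (hc' y x).1 hyx, ?_⟩
      simp [hmx, hmy]
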